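/- Let 0 < a < 1/4. Then the function σ ↦ P(σ,a) has exactly one zero in the open interval (0, ∞), and this zero is simple; moreover, for σ < 0 one has P(σ,a) = 0 if and only if σ is a negative even integer, and each of these zeros is simple. -/

import Mathlib

open HurwitzZeta Complex

/-- `P(s,a) = Li_s(e^{2πia}) + Li_s(e^{2πi(1−a)})`. -/
noncomputable def Pf (a : ℝ) : ℂ → ℂ :=
  fun s => expZeta a s + expZeta (1 - a : ℝ) s

/-!
Since `P(s,a) = 2 ∑ cos(2πna) n⁻ˢ`, it suffices to locate the real zeros of `cosZeta a`.

For `σ > 0`, `Γ(σ) · cosZeta a σ` is the Mellin transform `M(σ)` of the kernel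
`k(t) = ∑_{n ≥ 1} cos(2πna) e⁻ⁿᵗ`. In closed form, with `c = cos(2πa)`, the sign of `k(t)` is that
of `c - e⁻ᵗ`, so if `0 < c < 1` it changes sign only once, at `x₀ = -log c > 0`. Differentiating
under the integral,
`M'(σ) - log x₀ · M(σ) = ∫ t^(σ-1) log(t/x₀) k(t) dt > 0`,
so `x₀^(-σ) M(σ)` is strictly increasing and `M' > 0` at a zero of `M`. A zero exists because
`cosZeta a` runs from `-1/2` at `0` to `c > 0` at infinity.

For `σ < 0`, the functional equation writes `cosZeta a σ` as `cos(π(1-σ)/2)` times a factor that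
does not vanish, because the Dirichlet series of the even Hurwitz zeta function has nonnegative
terms.
-/

open Asymptotics Filter MeasureTheory Set Topology

/-! ### Real Mellin transforms -/

section RealMellin

/-- The Mellin transform of a real function at a real point, as a real number; Mathlib's `mellin`
is complex-valued. -/
noncomputable def realMellin (f : ℝ → ℝ) (σ : ℝ) : ℝ :=
  ∫ t in Ioi (0 : ℝ), t ^ (σ - 1) * f t

lemma ofReal_cpow_sub_one_mul (x : ℝ) {t : ℝ} (ht : 0 ≤ t) (σ : ℝ) :
    (t : ℂ) ^ ((σ : ℂ) - 1) * x = ((t ^ (σ - 1) * x : ℝ) : ℂ) := by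
  rw [ofReal_mul, ofReal_cpow ht, ofReal_sub, ofReal_one]

lemma mellin_ofReal (f : ℝ → ℝ) (σ : ℝ) : mellin (fun t => (f t : ℂ)) σ = realMellin f σ := by
  rw [realMellin, ← integral_complex_ofReal, mellin]
  exact setIntegral_congr_fun measurableSet_Ioi fun t ht => ofReal_cpow_sub_one_mul _ ht.le σ

variable {f : ℝ → ℝ} {x₀ a b σ : ℝ}

lemma integrableOn_rpow_mul_of_mellinConvergent
    (hf : MellinConvergent (fun t => (f t : ℂ)) σ) :
    IntegrableOn (fun t : ℝ => t ^ (σ - 1) * f t) (Ioi 0) := by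
  refine IntegrableOn.congr_fun (Integrable.re hf) (fun t ht => ?_) measurableSet_Ioi
  rw [smul_eq_mul, ofReal_cpow_sub_one_mul _ (mem_Ioi.1 ht).le, RCLike.re_eq_complex_re, ofReal_re]

/-- On `(0, ∞)`, `f` changes sign from negative to positive at `x₀` and nowhere else; this forces
its Mellin transform to have at most one real zero. The value `f x₀` is unconstrained. -/
def ChangesSignAt (f : ℝ → ℝ) (x₀ : ℝ) : Prop :=
  ∀ t, 0 < t → t ≠ x₀ → 0 < (t - x₀) * f t

lemma ChangesSignAt.log_sub_log_mul_pos (hf : ChangesSignAt f x₀) (hx₀ : 0 < x₀) {t : ℝ}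
    (ht : 0 < t) (hne : t ≠ x₀) : 0 < (Real.log t - Real.log x₀) * f t := by
  have hft := hf t ht hne
  rcases hne.lt_or_gt with hlt | hgt
  · exact mul_pos_of_neg_of_neg (sub_neg.2 (Real.log_lt_log ht hlt))
      (neg_of_mul_pos_right hft (sub_neg.2 hlt).le)
  · exact mul_pos (sub_pos.2 (Real.log_lt_log hx₀ hgt))
      (pos_of_mul_pos_right hft (sub_pos.2 hgt).le)

lemma ChangesSignAt.log_mul_realMellin_lt (hf : ChangesSignAt f x₀) (hx₀ : 0 < x₀)
    (hint : IntegrableOn (fun t : ℝ => t ^ (σ - 1) * f t) (Ioi 0))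
    (hlog : IntegrableOn (fun t : ℝ => t ^ (σ - 1) * (Real.log t * f t)) (Ioi 0)) :
    Real.log x₀ * realMellin f σ < realMellin (fun t => Real.log t * f t) σ := by
  rw [← sub_pos, realMellin, realMellin, ← integral_const_mul,
    ← integral_sub hlog (hint.const_mul _)]
  have integrand_eq (t : ℝ) : t ^ (σ - 1) * (Real.log t * f t) -
      Real.log x₀ * (t ^ (σ - 1) * f t) =
        t ^ (σ - 1) * ((Real.log t - Real.log x₀) * f t) := by ring
  have integrand_pos {t : ℝ} (ht : 0 < t) (hne : t ≠ x₀) :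
      0 < t ^ (σ - 1) * ((Real.log t - Real.log x₀) * f t) :=
    mul_pos (Real.rpow_pos_of_pos ht _) (hf.log_sub_log_mul_pos hx₀ ht hne)
  refine (setIntegral_pos_iff_support_of_nonneg_ae ?_ (hlog.sub (hint.const_mul _))).2 ?_
  · filter_upwards [ae_restrict_mem measurableSet_Ioi] with t ht
    rw [Pi.zero_apply, Pi.sub_apply, integrand_eq]
    rcases eq_or_ne t x₀ with rfl | hne
    · rw [sub_self, zero_mul, mul_zero]
    · exact (integrand_pos ht hne).le
  · refine (by simp : 0 < volume (Ioi x₀)).trans_le (measure_mono fun t ht => ?_)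
    have ht₀ : 0 < t := hx₀.trans ht
    refine ⟨?_, ht₀⟩
    rw [Function.mem_support, Pi.sub_apply, integrand_eq]
    exact (integrand_pos ht₀ (ne_of_gt ht)).ne'

lemma locallyIntegrableOn_ofReal {s : Set ℝ} (hf : LocallyIntegrableOn f s) :
    LocallyIntegrableOn (fun t => (f t : ℂ)) s := fun x hx =>
  let ⟨u, hu, hfu⟩ := hf x hx
  ⟨u, hu, hfu.ofReal⟩

lemma integrableOn_rpow_mul_of_isBigO_rpow (hfc : LocallyIntegrableOn f (Ioi 0))
    (hf_top : f =O[atTop] (· ^ (-b))) (hσb : σ < b)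
    (hf_bot : f =O[𝓝[>] 0] (· ^ (-a))) (haσ : a < σ) :
    IntegrableOn (fun t : ℝ => t ^ (σ - 1) * f t) (Ioi 0) :=
  integrableOn_rpow_mul_of_mellinConvergent <|
    mellinConvergent_of_isBigO_rpow (locallyIntegrableOn_ofReal hfc) (isBigO_ofReal_left.2 hf_top)
      hσb (isBigO_ofReal_left.2 hf_bot) haσ

lemma realMellin_hasDerivAt_of_isBigO_rpow (hfc : LocallyIntegrableOn f (Ioi 0))
    (hf_top : f =O[atTop] (· ^ (-b))) (hσb : σ < b)
    (hf_bot : f =O[𝓝[>] 0] (· ^ (-a))) (haσ : a < σ) :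
    IntegrableOn (fun t : ℝ => t ^ (σ - 1) * (Real.log t * f t)) (Ioi 0) ∧
      HasDerivAt (realMellin f) (realMellin (fun t => Real.log t * f t) σ) σ := by
  obtain ⟨hconv, hderiv⟩ := mellin_hasDerivAt_of_isBigO_rpow (s := σ)
    (locallyIntegrableOn_ofReal hfc) (isBigO_ofReal_left.2 hf_top) hσb
    (isBigO_ofReal_left.2 hf_bot) haσ
  simp only [real_smul, ← ofReal_mul] at hconv hderiv
  refine ⟨integrableOn_rpow_mul_of_mellinConvergent hconv, ?_⟩
  simpa only [mellin_ofReal, ofReal_re] using hderiv.real_of_complex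

lemma ChangesSignAt.log_mul_realMellin_lt_deriv (hf : ChangesSignAt f x₀) (hx₀ : 0 < x₀)
    (hfc : LocallyIntegrableOn f (Ioi 0)) (hf_top : f =O[atTop] (· ^ (-b))) (hσb : σ < b)
    (hf_bot : f =O[𝓝[>] 0] (· ^ (-a))) (haσ : a < σ) :
    Real.log x₀ * realMellin f σ < deriv (realMellin f) σ := by
  obtain ⟨hlog, hderiv⟩ := realMellin_hasDerivAt_of_isBigO_rpow hfc hf_top hσb hf_bot haσ
  rw [hderiv.deriv]
  exact hf.log_mul_realMellin_lt hx₀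
    (integrableOn_rpow_mul_of_isBigO_rpow hfc hf_top hσb hf_bot haσ) hlog

lemma ChangesSignAt.strictMonoOn_rpow_neg_mul_realMellin (hf : ChangesSignAt f x₀) (hx₀ : 0 < x₀)
    (hfc : LocallyIntegrableOn f (Ioi 0)) (hf_top : f =O[atTop] (· ^ (-b)))
    (hf_bot : f =O[𝓝[>] 0] (· ^ (-a))) :
    StrictMonoOn (fun σ => x₀ ^ (-σ) * realMellin f σ) (Ioo a b) := by
  have hderiv {σ : ℝ} (hσ : σ ∈ Ioo a b) :
      HasDerivAt (fun σ => x₀ ^ (-σ) * realMellin f σ)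
        (x₀ ^ (-σ) * (deriv (realMellin f) σ - Real.log x₀ * realMellin f σ)) σ := by
    have hmellin := (realMellin_hasDerivAt_of_isBigO_rpow hfc hf_top hσ.2 hf_bot
      hσ.1).2.differentiableAt.hasDerivAt
    refine (((hasDerivAt_neg σ).const_rpow hx₀).mul hmellin).congr_deriv ?_
    ring
  refine strictMonoOn_of_deriv_pos (convex_Ioo a b)
    (fun σ hσ => (hderiv hσ).continuousAt.continuousWithinAt) fun σ hσ => ?_
  rw [interior_Ioo] at hσ
  rw [(hderiv hσ).deriv]
  exact mul_pos (Real.rpow_pos_of_pos hx₀ _) <| sub_pos.2 <|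
    hf.log_mul_realMellin_lt_deriv hx₀ hfc hf_top hσ.2 hf_bot hσ.1

end RealMellin

/-! ### The cosine kernel -/

section CosKernel

/-- The generating function `∑_{n ≥ 1} cos (nθ) rⁿ`, in closed form, so that its sign is visible and
it also makes sense at `r = 1`. -/
noncomputable def cosGenFun (θ r : ℝ) : ℝ :=
  r * (Real.cos θ - r) / (1 - 2 * r * Real.cos θ + r ^ 2)

lemma hasSum_cosGenFun (θ : ℝ) {r : ℝ} (hr : |r| < 1) :
    HasSum (fun n : ℕ => Real.cos ((n + 1) * θ) * r ^ (n + 1)) (cosGenFun θ r) := by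
  set z : ℂ := r * cexp (θ * I) with hz
  have hre : z.re = r * Real.cos θ := by rw [hz, re_ofReal_mul, exp_ofReal_mul_I_re]
  have him : z.im = r * Real.sin θ := by rw [hz, im_ofReal_mul, exp_ofReal_mul_I_im]
  have hnorm : ‖z‖ < 1 := by rwa [hz, norm_mul, norm_exp_ofReal_mul_I, mul_one, norm_real]
  have hnormSq : normSq (1 - z) = 1 - 2 * r * Real.cos θ + r ^ 2 := by
    rw [normSq_apply, sub_re, sub_im, one_re, one_im, hre, him]
    linear_combination r ^ 2 * Real.sin_sq_add_cos_sq θ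
  have hsum : (z * (1 - z)⁻¹).re = cosGenFun θ r := by
    rw [mul_re, inv_re, inv_im, hnormSq, cosGenFun, sub_re, sub_im, one_re, one_im, hre, him,
      mul_div_assoc', mul_div_assoc', ← sub_div]
    congr 1
    linear_combination -r ^ 2 * Real.sin_sq_add_cos_sq θ
  have hterm (n : ℕ) : (z * z ^ n).re = Real.cos ((n + 1) * θ) * r ^ (n + 1) := by
    rw [← pow_succ', hz, mul_pow, ← Complex.exp_nat_mul, ← ofReal_pow, re_ofReal_mul, mul_comm,
      ← mul_assoc, ← ofReal_natCast, ← ofReal_mul, exp_ofReal_mul_I_re, Nat.cast_succ]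
  simpa only [hterm, hsum] using hasSum_re ((hasSum_geometric_of_norm_lt_one hnorm).mul_left z)

variable {θ : ℝ}

lemma cosGenFun_denom_pos (hθ : Real.cos θ < 1) {r : ℝ} (hr : 0 ≤ r) :
    0 < 1 - 2 * r * Real.cos θ + r ^ 2 := by
  have hsub : 0 < (1 - Real.cos θ) / 2 := half_pos (sub_pos.2 hθ)
  have hadd : 0 ≤ (1 + Real.cos θ) / 2 := by linarith [Real.neg_one_le_cos θ]
  have hdecomp : 1 - 2 * r * Real.cos θ + r ^ 2 =
      (1 + r) ^ 2 * ((1 - Real.cos θ) / 2) + (1 - r) ^ 2 * ((1 + Real.cos θ) / 2) := by ring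
  rw [hdecomp]
  exact add_pos_of_pos_of_nonneg (mul_pos (by positivity) hsub) (mul_nonneg (sq_nonneg _) hadd)

lemma cosGenFun_isBigO_zero (θ : ℝ) : cosGenFun θ =O[𝓝 0] fun r => r := by
  have hdiff : DifferentiableAt ℝ (cosGenFun θ) 0 := by
    unfold cosGenFun
    fun_prop (disch := norm_num)
  have hzero : cosGenFun θ 0 = 0 := by rw [cosGenFun, zero_mul, zero_div]
  simpa only [hzero, sub_zero] using hdiff.isBigO_sub

/-- The function whose Mellin transform is `s ↦ Γ(s) ∑_{n ≥ 1} cos (nθ) n⁻ˢ`. -/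
noncomputable def cosExpKernel (θ t : ℝ) : ℝ :=
  cosGenFun θ (Real.exp (-t))

lemma hasSum_cosExpKernel (θ : ℝ) {t : ℝ} (ht : 0 < t) :
    HasSum (fun n : ℕ => Real.cos ((n + 1) * θ) * Real.exp (-(n + 1) * t)) (cosExpKernel θ t) := by
  have hexp : |Real.exp (-t)| < 1 := by
    rwa [Real.abs_exp, Real.exp_lt_one_iff, neg_lt_zero]
  refine (hasSum_cosGenFun θ hexp).congr_fun fun n => ?_
  rw [← Real.exp_nat_mul]
  push_cast
  ring_nf

lemma continuous_cosExpKernel (hθ : Real.cos θ < 1) : Continuous (cosExpKernel θ) := by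
  unfold cosExpKernel cosGenFun
  exact Continuous.div (by fun_prop) (by fun_prop)
    fun t => (cosGenFun_denom_pos hθ (Real.exp_pos _).le).ne'

lemma cosExpKernel_isBigO_exp (θ : ℝ) : cosExpKernel θ =O[atTop] fun t => Real.exp (-1 * t) := by
  simp only [neg_one_mul]
  exact (cosGenFun_isBigO_zero θ).comp_tendsto Real.tendsto_exp_neg_atTop_nhds_zero

lemma cosExpKernel_isBigO_rpow_atTop (θ b : ℝ) : cosExpKernel θ =O[atTop] (· ^ (-b)) :=
  (cosExpKernel_isBigO_exp θ).trans (isLittleO_exp_neg_mul_rpow_atTop one_pos _).isBigO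

lemma cosExpKernel_isBigO_rpow_zero (hθ : Real.cos θ < 1) :
    cosExpKernel θ =O[𝓝[>] 0] (· ^ (-(0 : ℝ))) := by
  simp only [neg_zero, Real.rpow_zero]
  exact ((continuous_cosExpKernel hθ).tendsto 0).mono_left nhdsWithin_le_nhds |>.isBigO_one ℝ

lemma locallyIntegrableOn_cosExpKernel (hθ : Real.cos θ < 1) (s : Set ℝ) :
    LocallyIntegrableOn (cosExpKernel θ) s :=
  (continuous_cosExpKernel hθ).locallyIntegrable.locallyIntegrableOn s

lemma changesSignAt_cosExpKernel (hθ₀ : 0 < Real.cos θ) (hθ₁ : Real.cos θ < 1) :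
    ChangesSignAt (cosExpKernel θ) (-Real.log (Real.cos θ)) := by
  intro t _ hne
  have hexp := Real.exp_pos (-t)
  rw [cosExpKernel, cosGenFun, mul_div_assoc']
  refine div_pos ?_ (cosGenFun_denom_pos hθ₁ hexp.le)
  rw [mul_left_comm]
  refine mul_pos hexp ?_
  rcases hne.lt_or_gt with hlt | hgt
  · have : Real.cos θ < Real.exp (-t) := (Real.log_lt_iff_lt_exp hθ₀).1 (lt_neg.1 hlt)
    exact mul_pos_of_neg_of_neg (sub_neg.2 hlt) (sub_neg.2 this)
  · have : Real.exp (-t) < Real.cos θ := (Real.lt_log_iff_exp_lt hθ₀).1 (neg_lt.1 hgt)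
    exact mul_pos (sub_pos.2 hgt) (sub_pos.2 this)

lemma differentiableAt_mellin_cosExpKernel (hθ : Real.cos θ < 1) {s : ℂ} (hs : 0 < s.re) :
    DifferentiableAt ℂ (mellin fun t => (cosExpKernel θ t : ℂ)) s :=
  mellin_differentiableAt_of_isBigO_rpow_exp one_pos
    (locallyIntegrableOn_ofReal (locallyIntegrableOn_cosExpKernel hθ _))
    (isBigO_ofReal_left.2 (cosExpKernel_isBigO_exp θ))
    (isBigO_ofReal_left.2 (cosExpKernel_isBigO_rpow_zero hθ)) hs

lemma log_mul_realMellin_cosExpKernel_lt_deriv (hθ₀ : 0 < Real.cos θ) (hθ₁ : Real.cos θ < 1)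
    {σ : ℝ} (hσ : 0 < σ) :
    Real.log (-Real.log (Real.cos θ)) * realMellin (cosExpKernel θ) σ <
      deriv (realMellin (cosExpKernel θ)) σ :=
  (changesSignAt_cosExpKernel hθ₀ hθ₁).log_mul_realMellin_lt_deriv
    (neg_pos.2 (Real.log_neg hθ₀ hθ₁)) (locallyIntegrableOn_cosExpKernel hθ₁ _)
    (cosExpKernel_isBigO_rpow_atTop θ (σ + 1)) (lt_add_one σ)
    (cosExpKernel_isBigO_rpow_zero hθ₁) hσ

lemma realMellin_cosExpKernel_zero_unique (hθ₀ : 0 < Real.cos θ) (hθ₁ : Real.cos θ < 1)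
    {σ τ : ℝ} (hσ : 0 < σ) (hτ : 0 < τ) (hσ_zero : realMellin (cosExpKernel θ) σ = 0)
    (hτ_zero : realMellin (cosExpKernel θ) τ = 0) : σ = τ := by
  have hmono := (changesSignAt_cosExpKernel hθ₀ hθ₁).strictMonoOn_rpow_neg_mul_realMellin
    (neg_pos.2 (Real.log_neg hθ₀ hθ₁)) (locallyIntegrableOn_cosExpKernel hθ₁ _)
    (cosExpKernel_isBigO_rpow_atTop θ (max σ τ + 1)) (cosExpKernel_isBigO_rpow_zero hθ₁)
  refine hmono.injOn ⟨hσ, ?_⟩ ⟨hτ, ?_⟩ ?_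
  · exact (le_max_left σ τ).trans_lt (lt_add_one _)
  · exact (le_max_right σ τ).trans_lt (lt_add_one _)
  · simp only [hσ_zero, hτ_zero, mul_zero]

end CosKernel

/-! ### Positive zeros -/

section PositiveZeros

variable {a : ℝ}

lemma coe_unitAddCircle_ne_zero_of_cos_lt_one (ha : Real.cos (2 * Real.pi * a) < 1) :
    (a : UnitAddCircle) ≠ 0 := by
  rw [Ne, AddCircle.coe_eq_zero_iff]
  rintro ⟨n, rfl⟩
  refine ha.ne ((Real.cos_eq_one_iff _).2 ⟨n, ?_⟩)
  rw [zsmul_one, mul_comm]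

lemma differentiableAt_Gamma_of_re_pos {s : ℂ} (hs : 0 < s.re) : DifferentiableAt ℂ Gamma s := by
  refine differentiableAt_Gamma s fun m hm => hs.not_ge ?_
  rw [hm, neg_re, natCast_re]
  exact neg_nonpos.2 m.cast_nonneg

lemma mellin_cosExpKernel_of_one_lt_re (a : ℝ) {s : ℂ} (hs : 1 < s.re) :
    mellin (fun t => (cosExpKernel (2 * Real.pi * a) t : ℂ)) s = Gamma s * cosZeta a s := by
  have hs₀ : s ≠ 0 := ne_zero_of_one_lt_re hs
  have hmellin := hasSum_mellin (a := fun n : ℕ => (Real.cos ((n + 1) * (2 * Real.pi * a)) : ℂ))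
    (p := fun n : ℕ => (n + 1 : ℝ)) (fun n => .inr n.cast_add_one_pos) (zero_lt_one.trans hs)
    (F := fun t => (cosExpKernel (2 * Real.pi * a) t : ℂ))
    (fun t ht => by
      simpa only [ofReal_mul] using hasSum_ofReal.2 (hasSum_cosExpKernel (2 * Real.pi * a) ht)) ?_
  · have hdirichlet := ((hasSum_nat_add_iff' 1).2 (hasSum_nat_cosZeta a hs)).mul_left (Gamma s)
    simp only [Finset.sum_range_one, Nat.cast_zero, zero_cpow hs₀, div_zero, sub_zero]
      at hdirichlet
    refine hmellin.unique (hdirichlet.congr_fun fun n => ?_)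
    push_cast
    ring_nf
  · have hsum := (summable_nat_add_iff 1).2 (Real.summable_one_div_nat_rpow.2 hs)
    refine hsum.of_nonneg_of_le (fun n => by positivity) fun n => ?_
    rw [norm_real, Real.norm_eq_abs, Nat.cast_succ]
    gcongr
    exact Real.abs_cos_le_one _

lemma mellin_cosExpKernel (ha : Real.cos (2 * Real.pi * a) < 1) {s : ℂ} (hs : 0 < s.re) :
    mellin (fun t => (cosExpKernel (2 * Real.pi * a) t : ℂ)) s = Gamma s * cosZeta a s := by
  have hopen (x : ℝ) : IsOpen {z : ℂ | x < z.re} := isOpen_lt continuous_const continuous_re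
  have hmellin : AnalyticOnNhd ℂ (mellin fun t => (cosExpKernel (2 * Real.pi * a) t : ℂ))
      {z | 0 < z.re} :=
    DifferentiableOn.analyticOnNhd (fun z hz =>
      (differentiableAt_mellin_cosExpKernel ha hz).differentiableWithinAt) (hopen 0)
  have hzeta : AnalyticOnNhd ℂ (fun z => Gamma z * cosZeta a z) {z | 0 < z.re} :=
    DifferentiableOn.analyticOnNhd (fun z hz =>
      ((differentiableAt_Gamma_of_re_pos hz).mul (differentiable_cosZeta_of_ne_zero
        (coe_unitAddCircle_ne_zero_of_cos_lt_one ha) z)).differentiableWithinAt) (hopen 0)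
  refine hmellin.eqOn_of_preconnected_of_eventuallyEq hzeta
    (convex_halfSpace_re_gt 0).isPreconnected (z₀ := 2) (by simp) ?_ hs
  filter_upwards [(hopen 1).mem_nhds (show (1 : ℝ) < re 2 by simp)] with z hz
  exact mellin_cosExpKernel_of_one_lt_re a hz

lemma cosZeta_ofReal_of_pos (ha : Real.cos (2 * Real.pi * a) < 1) {σ : ℝ} (hσ : 0 < σ) :
    cosZeta a σ = (realMellin (cosExpKernel (2 * Real.pi * a)) σ / Real.Gamma σ : ℝ) := by
  have hΓ : Gamma (σ : ℂ) ≠ 0 := Gamma_ne_zero_of_re_pos (by simpa using hσ)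
  rw [ofReal_div, ← mellin_ofReal, mellin_cosExpKernel ha (by simpa using hσ), ← Gamma_ofReal,
    mul_div_cancel_left₀ _ hΓ]

lemma cosZeta_ofReal_eq_zero_iff_re (ha : Real.cos (2 * Real.pi * a) < 1) {σ : ℝ} (hσ : 0 < σ) :
    cosZeta a σ = 0 ↔ (cosZeta a σ).re = 0 := by
  rw [cosZeta_ofReal_of_pos ha hσ, ofReal_re, ofReal_eq_zero]

lemma cosZeta_ofReal_eq_zero_iff_realMellin (ha : Real.cos (2 * Real.pi * a) < 1) {σ : ℝ}
    (hσ : 0 < σ) :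
    cosZeta a σ = 0 ↔ realMellin (cosExpKernel (2 * Real.pi * a)) σ = 0 := by
  rw [cosZeta_ofReal_of_pos ha hσ, ofReal_eq_zero, div_eq_zero_iff,
    or_iff_left (Real.Gamma_pos_of_pos hσ).ne']

lemma tendsto_cosZeta_atTop (a : ℝ) :
    Tendsto (fun σ : ℝ => cosZeta a σ) atTop (𝓝 (Real.cos (2 * Real.pi * a) : ℝ)) := by
  have habs : LSeries.abscissaOfAbsConv (fun n : ℕ => (Real.cos (2 * Real.pi * a * n) : ℂ)) < ⊤ :=
    (LSeriesHasSum_cos a (s := 2) (by simp)).LSeriesSummable.abscissaOfAbsConv_le.trans_lt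
      (EReal.coe_lt_top _)
  have hlim := LSeries.tendsto_atTop habs
  rw [Nat.cast_one, mul_one] at hlim
  refine hlim.congr' ?_
  filter_upwards [eventually_gt_atTop 1] with σ hσ
  exact (LSeriesHasSum_cos a (by simpa using hσ)).LSeries_eq

lemma exists_pos_cosZeta_eq_zero (ha₀ : 0 < Real.cos (2 * Real.pi * a))
    (ha₁ : Real.cos (2 * Real.pi * a) < 1) : ∃ σ : ℝ, 0 < σ ∧ cosZeta a σ = 0 := by
  have hcont : Continuous fun σ : ℝ => (cosZeta a σ).re :=
    continuous_re.comp <| (differentiable_cosZeta_of_ne_zero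
      (coe_unitAddCircle_ne_zero_of_cos_lt_one ha₁)).continuous.comp continuous_ofReal
  have hlim : Tendsto (fun σ : ℝ => (cosZeta a σ).re) atTop (𝓝 (Real.cos (2 * Real.pi * a))) :=
    (continuous_re.tendsto (Real.cos (2 * Real.pi * a) : ℝ)).comp (tendsto_cosZeta_atTop a)
  have hzero : (cosZeta a (0 : ℝ)).re < 0 := by
    rw [ofReal_zero, cosZeta_apply_zero]
    norm_num
  obtain ⟨b, hb_pos, hb⟩ := ((hlim.eventually_const_lt ha₀).and (eventually_gt_atTop 0)).exists
  obtain ⟨σ, hσ, hσ_zero⟩ := intermediate_value_Ioo hb.le hcont.continuousOn ⟨hzero, hb_pos⟩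
  exact ⟨σ, hσ.1, (cosZeta_ofReal_eq_zero_iff_re ha₁ hσ.1).2 hσ_zero⟩

theorem existsUnique_pos_cosZeta_eq_zero (ha₀ : 0 < Real.cos (2 * Real.pi * a))
    (ha₁ : Real.cos (2 * Real.pi * a) < 1) : ∃! σ : ℝ, 0 < σ ∧ cosZeta a σ = 0 := by
  refine existsUnique_of_exists_of_unique (exists_pos_cosZeta_eq_zero ha₀ ha₁) ?_
  rintro σ τ ⟨hσ, hσ_zero⟩ ⟨hτ, hτ_zero⟩
  exact realMellin_cosExpKernel_zero_unique ha₀ ha₁ hσ hτ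
    ((cosZeta_ofReal_eq_zero_iff_realMellin ha₁ hσ).1 hσ_zero)
    ((cosZeta_ofReal_eq_zero_iff_realMellin ha₁ hτ).1 hτ_zero)

theorem deriv_cosZeta_ne_zero_of_pos (ha₀ : 0 < Real.cos (2 * Real.pi * a))
    (ha₁ : Real.cos (2 * Real.pi * a) < 1) {σ : ℝ} (hσ : 0 < σ) (hσ_zero : cosZeta a σ = 0) :
    deriv (cosZeta a) σ ≠ 0 := by
  intro hderiv
  have hσ_re : 0 < (σ : ℂ).re := by rwa [ofReal_re]
  have hprod : HasDerivAt (fun s => Gamma s * cosZeta a s) 0 σ := by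
    simpa only [hσ_zero, hderiv, mul_zero, add_zero] using
      (differentiableAt_Gamma_of_re_pos hσ_re).hasDerivAt.fun_mul
        (differentiable_cosZeta_of_ne_zero (coe_unitAddCircle_ne_zero_of_cos_lt_one ha₁)
          σ).hasDerivAt
  have hmellin : HasDerivAt (mellin fun t => (cosExpKernel (2 * Real.pi * a) t : ℂ)) 0 σ := by
    refine hprod.congr_of_eventuallyEq ?_
    filter_upwards [(isOpen_lt continuous_const continuous_re).mem_nhds hσ_re] with s hs
    exact mellin_cosExpKernel ha₁ hs
  have hreal : HasDerivAt (realMellin (cosExpKernel (2 * Real.pi * a))) 0 σ := by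
    simpa only [mellin_ofReal, ofReal_re, zero_re] using hmellin.real_of_complex
  have hlt := log_mul_realMellin_cosExpKernel_lt_deriv ha₀ ha₁ hσ
  rw [(cosZeta_ofReal_eq_zero_iff_realMellin ha₁ hσ).1 hσ_zero, mul_zero, hreal.deriv] at hlt
  exact lt_irrefl 0 hlt

end PositiveZeros

/-! ### Negative zeros -/

section NegativeZeros

lemma hurwitzZetaEven_re_pos (a : ℝ) {σ : ℝ} (hσ : 1 < σ) : 0 < (hurwitzZetaEven a σ).re := by
  have hsum : HasSum (fun n : ℤ => 1 / |n + a| ^ σ / 2) (hurwitzZetaEven a σ).re := by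
    refine (hasSum_re (hasSum_int_hurwitzZetaEven a (s := σ) (by simpa using hσ))).congr_fun
      fun n => ?_
    rw [← ofReal_cpow (abs_nonneg _)]
    norm_cast
  obtain ⟨n, hn⟩ : ∃ n : ℤ, (n : ℝ) + a ≠ 0 := by
    by_contra! hall
    linarith [hall 0, hall 1, Int.cast_zero (R := ℝ), Int.cast_one (R := ℝ)]
  have hterm : 0 < 1 / |n + a| ^ σ / 2 := by
    have := abs_pos.2 hn
    positivity
  exact hterm.trans_le (le_hasSum hsum n fun m _ => by positivity)

/-- The factor of `cosZeta a (1 - s)` complementary to `cos (π s / 2)` in the functional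
equation; it has no zeros on `(1, ∞)`. -/
noncomputable def cosZetaCofactor (a : ℝ) (s : ℂ) : ℂ :=
  2 * (2 * Real.pi) ^ (-s) * Gamma s * hurwitzZetaEven a s

lemma cosZeta_one_sub_eq_cofactor_mul_cos (a : ℝ) {s : ℂ} (hs : 1 < s.re) :
    cosZeta a (1 - s) = cosZetaCofactor a s * cos (Real.pi * s / 2) := by
  rw [cosZeta_one_sub a, cosZetaCofactor]
  · ring
  · rintro n rfl
    rw [sub_re, one_re, natCast_re] at hs
    exact hs.not_ge (sub_le_self 1 n.cast_nonneg)

lemma differentiableAt_cosZetaCofactor (a : ℝ) {s : ℂ} (hs : 1 < s.re) :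
    DifferentiableAt ℂ (cosZetaCofactor a) s := by
  have hpi : (2 * Real.pi : ℂ) ≠ 0 := by simp [Real.pi_ne_zero]
  have hs₁ : s ≠ 1 := by rintro rfl; exact lt_irrefl _ hs
  exact ((differentiableAt_neg_iff.2 differentiableAt_id |>.const_cpow (.inl hpi) |>.const_mul 2
    ).mul (differentiableAt_Gamma_of_re_pos (zero_lt_one.trans hs))).mul
    (differentiableAt_hurwitzZetaEven _ hs₁)

lemma cosZetaCofactor_ne_zero (a : ℝ) {σ : ℝ} (hσ : 1 < σ) : cosZetaCofactor a σ ≠ 0 := by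
  have hpi : (2 * Real.pi : ℂ) ≠ 0 := by simp [Real.pi_ne_zero]
  have hzeta : hurwitzZetaEven a (σ : ℂ) ≠ 0 := fun h =>
    (hurwitzZetaEven_re_pos a hσ).ne' (by rw [h, zero_re])
  have hΓ : Gamma (σ : ℂ) ≠ 0 := Gamma_ne_zero_of_re_pos (by rw [ofReal_re]; linarith)
  have hpow : (2 * Real.pi : ℂ) ^ (-σ : ℂ) ≠ 0 := fun h => hpi (cpow_eq_zero_iff _ _ |>.1 h).1
  exact mul_ne_zero (mul_ne_zero (mul_ne_zero two_ne_zero hpow) hΓ) hzeta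

lemma cosZeta_one_sub_eq_zero_iff (a : ℝ) {σ : ℝ} (hσ : 1 < σ) :
    cosZeta a (1 - σ) = 0 ↔ cos (Real.pi * σ / 2) = 0 := by
  rw [cosZeta_one_sub_eq_cofactor_mul_cos a (by rwa [ofReal_re]),
    mul_eq_zero_iff_left (cosZetaCofactor_ne_zero a hσ)]

lemma cos_pi_mul_div_two_eq_zero_iff {σ : ℝ} (hσ : 1 < σ) :
    Real.cos (Real.pi * σ / 2) = 0 ↔ ∃ n : ℕ, σ = 2 * n + 3 := by
  rw [Real.cos_eq_zero_iff]
  have hk (k : ℤ) : Real.pi * σ / 2 = (2 * k + 1) * Real.pi / 2 ↔ σ = 2 * k + 1 := by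
    rw [mul_comm, div_left_inj' two_ne_zero, mul_left_inj' Real.pi_ne_zero]
  simp only [hk]
  constructor
  · rintro ⟨k, rfl⟩
    have hk_pos : 1 ≤ k := by
      have : (0 : ℝ) < k := by linarith
      exact_mod_cast this
    obtain ⟨n, rfl⟩ := Int.le.dest hk_pos
    exact ⟨n, by push_cast; ring⟩
  · rintro ⟨n, rfl⟩
    exact ⟨n + 1, by push_cast; ring⟩

theorem cosZeta_eq_zero_iff_of_neg (a : ℝ) {σ : ℝ} (hσ : σ < 0) :
    cosZeta a σ = 0 ↔ ∃ n : ℕ, σ = -(2 * (n + 1)) := by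
  have hone_sub : 1 < 1 - σ := by linarith
  have hcos := cosZeta_one_sub_eq_zero_iff a hone_sub
  rw [ofReal_sub, ofReal_one, sub_sub_cancel] at hcos
  rw [hcos, ← ofReal_one, ← ofReal_sub, ← ofReal_mul, ← ofReal_ofNat, ← ofReal_div,
    ← ofReal_cos, ofReal_eq_zero, cos_pi_mul_div_two_eq_zero_iff hone_sub]
  refine exists_congr fun n => ?_
  constructor <;> intro h <;> linarith

lemma sin_ne_zero_of_cos_eq_zero {z : ℂ} (hz : cos z = 0) : sin z ≠ 0 := by
  intro hsin
  simpa [hsin, hz] using sin_sq_add_cos_sq z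

theorem deriv_cosZeta_ne_zero_of_neg (a : ℝ) {σ : ℝ} (hσ : σ < 0) (hσ_zero : cosZeta a σ = 0) :
    deriv (cosZeta a) σ ≠ 0 := by
  obtain ⟨τ, rfl⟩ : ∃ τ : ℝ, σ = 1 - τ := ⟨1 - σ, by ring⟩
  have hτ : 1 < τ := by linarith
  rw [ofReal_sub, ofReal_one] at hσ_zero ⊢
  have hcos := (cosZeta_one_sub_eq_zero_iff a hτ).1 hσ_zero
  have hderiv_cos : HasDerivAt (fun s : ℂ => cos (Real.pi * s / 2))
      (-sin (Real.pi * τ / 2) * (Real.pi * 1 / 2)) τ :=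
    (((hasDerivAt_id (τ : ℂ)).const_mul (Real.pi : ℂ)).div_const 2).ccos
  have hderiv : HasDerivAt (fun s => cosZeta a (1 - s))
      (cosZetaCofactor a τ * (-sin (Real.pi * τ / 2) * (Real.pi * 1 / 2))) τ := by
    have hprod :=
      (differentiableAt_cosZetaCofactor a (by simpa using hτ)).hasDerivAt.fun_mul hderiv_cos
    rw [hcos, mul_zero, zero_add] at hprod
    refine hprod.congr_of_eventuallyEq ?_
    filter_upwards [(isOpen_lt continuous_const continuous_re).mem_nhds
      (show (1 : ℝ) < (τ : ℂ).re by rwa [ofReal_re])] with s hs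
    exact cosZeta_one_sub_eq_cofactor_mul_cos a hs
  rw [← neg_ne_zero, ← deriv_comp_const_sub, hderiv.deriv]
  simp [cosZetaCofactor_ne_zero a hτ, sin_ne_zero_of_cos_eq_zero hcos, Real.pi_ne_zero]

end NegativeZeros

/-! ### Real zeros of `Pf` -/

lemma Pf_eq_two_mul_cosZeta (a : ℝ) : Pf a = fun s => 2 * cosZeta a s := by
  funext s
  have hneg : ((1 - a : ℝ) : UnitAddCircle) = -(a : UnitAddCircle) := by
    rw [AddCircle.coe_sub, AddCircle.coe_period, zero_sub]
  rw [Pf, hneg, cosZeta_eq]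
  ring

lemma Pf_eq_zero_iff {a : ℝ} {s : ℂ} : Pf a s = 0 ↔ cosZeta a s = 0 := by
  rw [Pf_eq_two_mul_cosZeta, mul_eq_zero_iff_left two_ne_zero]

lemma deriv_Pf_ne_zero_iff {a : ℝ} {s : ℂ} : deriv (Pf a) s ≠ 0 ↔ deriv (cosZeta a) s ≠ 0 := by
  rw [Pf_eq_two_mul_cosZeta, deriv_const_mul_field, Ne, mul_eq_zero_iff_left two_ne_zero]

theorem P_real_zeros_lt_quarter_general (a : ℝ) (ha₀ : 0 < Real.cos (2 * Real.pi * a))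
    (ha₁ : Real.cos (2 * Real.pi * a) < 1) :
    (∃! σ : ℝ, 0 < σ ∧ Pf a (σ : ℂ) = 0) ∧
    (∀ σ : ℝ, 0 < σ → Pf a (σ : ℂ) = 0 → deriv (Pf a) (σ : ℂ) ≠ 0) ∧
    (∀ σ : ℝ, σ < 0 →
      ((Pf a (σ : ℂ) = 0 ↔ ∃ n : ℕ, σ = -(2 * (n + 1))) ∧
       (Pf a (σ : ℂ) = 0 → deriv (Pf a) (σ : ℂ) ≠ 0))) := by
  simp only [Pf_eq_zero_iff, deriv_Pf_ne_zero_iff]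
  exact ⟨existsUnique_pos_cosZeta_eq_zero ha₀ ha₁,
    fun _ => deriv_cosZeta_ne_zero_of_pos ha₀ ha₁,
    fun _ hσ => ⟨cosZeta_eq_zero_iff_of_neg a hσ, deriv_cosZeta_ne_zero_of_neg a hσ⟩⟩

/-- For `0 < a < 1/4`, `P(·,a)` has exactly one zero in `(0,∞)`, which is simple,
and its real zeros in `(−∞,0)` are simple and exactly the negative even integers. -/
theorem P_real_zeros_lt_quarter (a : ℝ) (ha₀ : 0 < a) (ha₁ : a < 1 / 4) :
    (∃! σ : ℝ, 0 < σ ∧ Pf a (σ : ℂ) = 0) ∧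
    (∀ σ : ℝ, 0 < σ → Pf a (σ : ℂ) = 0 → deriv (Pf a) (σ : ℂ) ≠ 0) ∧
    (∀ σ : ℝ, σ < 0 →
      ((Pf a (σ : ℂ) = 0 ↔ ∃ n : ℕ, σ = -(2 * (n + 1))) ∧
       (Pf a (σ : ℂ) = 0 → deriv (Pf a) (σ : ℂ) ≠ 0))) := by
  have hangle_pos : 0 < 2 * Real.pi * a := by positivity
  have hangle_lt : 2 * Real.pi * a < Real.pi / 2 := by nlinarith [Real.pi_pos]
  exact P_real_zeros_lt_quarter_general a
    (Real.cos_pos_of_mem_Ioo ⟨by linarith, hangle_lt⟩)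
    (by simpa using Real.cos_lt_cos_of_nonneg_of_le_pi le_rfl (by linarith) hangle_pos)
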